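/- arXiv:1304.5775 — 3 statements merged into one kernel-verified Lean document; each statement's English description precedes it below -/
import Mathlib

section
/- There is no finite set Z of distinct points of X = ℙ¹×ℙ¹ such that, for the radical ideal I of Z, the equalities α*(I^{(m+2)}) = α*(I^{(m+1)}) = α*(I^{(m)}) hold for some positive integer m. Equivalently, for every such Z and every m ≥ 1 one has α*(I^{(m+2)}) > α*(I^{(m)}). -/
/-!
Differentiating once in an `x`-variable and once in a `y`-variable lowers the bidegree of a form by
`(1, 1)` and, by the Leibniz rule, sends `J ^ (m + 2)` into `J ^ m` for every ideal `J`. Euler's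
identity in each group of variables shows that the two variables can be chosen so that the
derivative of a given nonzero form of bidegree `(t + 1, t + 1)` is nonzero. Applied to a form of
least bidegree in `I^{(m+2)}`, this produces a nonzero form of bidegree `(t, t)` in `I^{(m)}`;
the least bidegree is not `(0, 0)` because proper ideals contain no nonzero constants.
-/

open MvPolynomial

noncomputable section

/-- The bi-graded polynomial ring `ℂ[x₀,x₁,y₀,y₁]`:
the first `Fin 2` summand indexes the variables `x₀,x₁`,
the second the variables `y₀,y₁`. -/
abbrev R4 : Type := MvPolynomial (Fin 2 ⊕ Fin 2) ℂ

/-- The weight function giving the bi-grading of `R4`. -/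
def biWeight : Fin 2 ⊕ Fin 2 → ℕ × ℕ := Sum.elim (fun _ => (1, 0)) (fun _ => (0, 1))

/-- `F` is a (possibly zero) form of bidegree `(p,q)`, i.e. homogeneous of degree `p`
in `x₀,x₁` and homogeneous of degree `q` in `y₀,y₁`. -/
def IsBiForm (F : R4) (p q : ℕ) : Prop :=
  IsWeightedHomogeneous biWeight F (p, q)

/-- The projective line `ℙ¹` over `ℂ`. -/
abbrev ProjLine := Projectivization ℂ (Fin 2 → ℂ)

/-- The bi-homogeneous prime ideal of a point `P = ([a:b],[c:d])` of `X = ℙ¹ × ℙ¹`,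
generated by `b·x₀ - a·x₁` and `d·y₀ - c·y₁`. -/
def pointIdeal (P : ProjLine × ProjLine) : Ideal R4 :=
  Ideal.span
    { C (P.1.rep 1) * X (Sum.inl 0) - C (P.1.rep 0) * X (Sum.inl 1),
      C (P.2.rep 1) * X (Sum.inr 0) - C (P.2.rep 0) * X (Sum.inr 1) }

/-- The `m`-th symbolic power of the radical ideal of the finite set of points `Z ⊂ X`:
`I^{(m)} = ⋂_{P ∈ Z} I(P)^m`.  For `m = 1` this is the radical ideal `I = I(Z)` itself. -/
def symbPow (Z : Finset (ProjLine × ProjLine)) (m : ℕ) : Ideal R4 :=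
  ⨅ P ∈ Z, pointIdeal P ^ m

/-- `α*(J)`: the least `t ≥ 0` such that `J` contains a nonzero form of bidegree `(t,t)`. -/
def alphaStar (J : Ideal R4) : ℕ :=
  sInf {t : ℕ | ∃ F ∈ J, F ≠ 0 ∧ IsBiForm F t t}

/-- `α⁺(J)`: the least `d ≥ 0` such that `J` contains a nonzero form of bidegree `(p,q)`
with `p + q = d`. -/
def alphaPlus (J : Ideal R4) : ℕ :=
  sInf {d : ℕ | ∃ p q : ℕ, p + q = d ∧ ∃ F ∈ J, F ≠ 0 ∧ IsBiForm F p q}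

theorem derivation_apply_mem_pow {R A : Type*} [CommSemiring R] [CommSemiring A] [Algebra R A]
    (D : Derivation R A A) (I : Ideal A) {n : ℕ} {a : A} (ha : a ∈ I ^ (n + 1)) :
    D a ∈ I ^ n := by
  induction n generalizing a with
  | zero => simp only [pow_zero, Ideal.one_eq_top, Submodule.mem_top]
  | succ n ih =>
    rw [pow_succ' I (n + 1)] at ha
    refine Submodule.mul_induction_on ha (fun b hb c hc => ?_) fun b c hb hc => ?_
    · rw [D.leibniz, smul_eq_mul, smul_eq_mul]
      refine add_mem ?_ (Ideal.mul_mem_right _ _ hc)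
      rw [pow_succ' I n]
      exact Ideal.mul_mem_mul hb (ih hc)
    · rw [map_add]
      exact add_mem hb hc

theorem derivation_apply_mem_iInf_pow {ι R A : Type*} [CommSemiring R] [CommSemiring A]
    [Algebra R A] (D : Derivation R A A) (J : ι → Ideal A) {n : ℕ} {a : A}
    (ha : a ∈ ⨅ k, J k ^ (n + 1)) : D a ∈ ⨅ k, J k ^ n := by
  rw [Submodule.mem_iInf] at ha ⊢
  exact fun k => derivation_apply_mem_pow D (J k) (ha k)

section WeightedHomogeneous

variable {σ R M N : Type*} [CommSemiring R] [AddCommMonoid M] [AddCommMonoid N]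
  {w : σ → M} {n : M} {φ : MvPolynomial σ R}

theorem isWeightedHomogeneous_comp (hφ : IsWeightedHomogeneous w φ n) (f : M →+ N) :
    IsWeightedHomogeneous (f ∘ w) φ (f n) := by
  intro d hd
  rw [← hφ hd, Finsupp.weight_apply, Finsupp.weight_apply, map_finsuppSum]
  simp only [Function.comp_apply, map_nsmul]

theorem exists_pderiv_ne_zero [Finite σ] [IsAddTorsionFree R]
    (hφ : IsWeightedHomogeneous w φ n) (hφ0 : φ ≠ 0) (f : M →+ ℕ) (hn : f n ≠ 0) :
    ∃ i, f (w i) ≠ 0 ∧ pderiv i φ ≠ 0 := by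
  have := Fintype.ofFinite σ
  by_contra! h
  have euler : ∑ i, f (w i) • (X i * pderiv i φ) = f n • φ :=
    (isWeightedHomogeneous_comp hφ f).sum_weight_X_mul_pderiv
  have vanish : f n • φ = 0 := by
    rw [← euler]
    refine Finset.sum_eq_zero fun i _ => ?_
    rcases eq_or_ne (f (w i)) 0 with hi | hi
    · rw [hi, zero_smul]
    · rw [h i hi, mul_zero, smul_zero]
  refine hφ0 (MvPolynomial.ext _ _ fun d => ?_)
  have coeff_vanish : f n • coeff d φ = 0 := by rw [← coeff_smul, vanish, coeff_zero]
  exact (smul_eq_zero_iff_right hn).mp coeff_vanish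

end WeightedHomogeneous

section LineForm

variable {σ R : Type*} [CommRing R] {s : Fin 2 → σ} {v : Fin 2 → R}

/-- The linear form in the two variables `X (s 0)`, `X (s 1)` vanishing at the point of the
projective line with homogeneous coordinates `v`. -/
def lineForm (s : Fin 2 → σ) (v : Fin 2 → R) : MvPolynomial σ R :=
  C (v 1) * X (s 0) - C (v 0) * X (s 1)

theorem lineForm_ne_zero (hs : Function.Injective s) (hv : v ≠ 0) : lineForm s v ≠ 0 := by
  intro h
  have eval_eq_zero (u : Fin 2 → R) : v 1 * u 0 - v 0 * u 1 = 0 := by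
    simpa [lineForm, hs.extend_apply] using congrArg (eval (Function.extend s u 0)) h
  refine hv (funext fun j => ?_)
  fin_cases j
  · simpa using eval_eq_zero ![0, 1]
  · simpa using eval_eq_zero ![1, 0]

theorem isWeightedHomogeneous_lineForm {M : Type*} [AddCommMonoid M] {w : σ → M} {n : M}
    (hw : ∀ j, w (s j) = n) (v : Fin 2 → R) : IsWeightedHomogeneous w (lineForm s v) n := by
  have hX (j : Fin 2) : IsWeightedHomogeneous w (X (s j) : MvPolynomial σ R) n :=
    hw j ▸ isWeightedHomogeneous_X R w (s j)
  exact ((hX 0).C_mul _).sub ((hX 1).C_mul _)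

theorem constantCoeff_lineForm (s : Fin 2 → σ) (v : Fin 2 → R) :
    constantCoeff (lineForm s v) = 0 := by
  simp only [lineForm, map_sub, map_mul, constantCoeff_X, mul_zero, sub_zero]

end LineForm

section BiForm

variable {F : R4} {p q : ℕ}

theorem IsBiForm.exists_pderiv_inl_ne_zero (hF : IsBiForm F (p + 1) q) (hF0 : F ≠ 0) :
    ∃ i, pderiv (Sum.inl i) F ≠ 0 ∧ IsBiForm (pderiv (Sum.inl i) F) p q := by
  obtain ⟨i | j, hw, hi⟩ :=
    exists_pderiv_ne_zero hF hF0 (AddMonoidHom.fst ℕ ℕ) (Nat.succ_ne_zero p)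
  · exact ⟨i, hi, IsWeightedHomogeneous.pderiv hF rfl⟩
  · exact absurd rfl hw

theorem IsBiForm.exists_pderiv_inr_ne_zero (hF : IsBiForm F p (q + 1)) (hF0 : F ≠ 0) :
    ∃ j, pderiv (Sum.inr j) F ≠ 0 ∧ IsBiForm (pderiv (Sum.inr j) F) p q := by
  obtain ⟨i | j, hw, hj⟩ :=
    exists_pderiv_ne_zero hF hF0 (AddMonoidHom.snd ℕ ℕ) (Nat.succ_ne_zero q)
  · exact absurd rfl hw
  · exact ⟨j, hj, IsWeightedHomogeneous.pderiv hF rfl⟩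

theorem IsBiForm.eq_C (hF : IsBiForm F 0 0) : F = C (constantCoeff F) := by
  have biWeight_ne_zero (k : Fin 2 ⊕ Fin 2) : biWeight k ≠ 0 := by
    rcases k with _ | _ <;> simp [biWeight]
  exact hF.weightedHomogeneousComponent_same.symm.trans
    (weightedHomogeneousComponent_zero F biWeight_ne_zero)

theorem IsBiForm.eq_top_of_mem (hF : IsBiForm F 0 0) (hF0 : F ≠ 0) {I : Ideal R4}
    (hFI : F ∈ I) : I = ⊤ := by
  have hFC := hF.eq_C
  have hconst : constantCoeff F ≠ 0 := by
    intro h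
    rw [h, C_0] at hFC
    exact hF0 hFC
  refine I.eq_top_of_isUnit_mem hFI ?_
  rw [hFC]
  exact hconst.isUnit.map C

end BiForm

section PointIdeal

/-- The form of bidegree `(1, 1)` cutting out the two rulings of `ℙ¹ × ℙ¹` through `P`. -/
def rulingsForm (P : ProjLine × ProjLine) : R4 :=
  lineForm Sum.inl P.1.rep * lineForm Sum.inr P.2.rep

variable (P : ProjLine × ProjLine)

theorem pointIdeal_eq_span_lineForm :
    pointIdeal P = Ideal.span {lineForm Sum.inl P.1.rep, lineForm Sum.inr P.2.rep} :=
  rfl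

theorem rulingsForm_mem_pointIdeal : rulingsForm P ∈ pointIdeal P :=
  Ideal.mul_mem_right _ _ (Ideal.subset_span (Set.mem_insert _ _))

theorem rulingsForm_ne_zero : rulingsForm P ≠ 0 :=
  mul_ne_zero (lineForm_ne_zero Sum.inl_injective P.1.rep_nonzero)
    (lineForm_ne_zero Sum.inr_injective P.2.rep_nonzero)

theorem isBiForm_rulingsForm : IsBiForm (rulingsForm P) 1 1 := by
  have hx : IsBiForm (lineForm Sum.inl P.1.rep) 1 0 := by
    refine isWeightedHomogeneous_lineForm (fun _ => ?_) _
    rfl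
  have hy : IsBiForm (lineForm Sum.inr P.2.rep) 0 1 := by
    refine isWeightedHomogeneous_lineForm (fun _ => ?_) _
    rfl
  exact IsWeightedHomogeneous.mul hx hy

theorem pointIdeal_le_ker_constantCoeff :
    pointIdeal P ≤ RingHom.ker (constantCoeff : R4 →+* ℂ) := by
  rw [pointIdeal_eq_span_lineForm, Ideal.span_le]
  rintro _ (rfl | rfl) <;> exact constantCoeff_lineForm _ _

theorem pointIdeal_ne_top : pointIdeal P ≠ ⊤ :=
  ne_top_of_le_ne_top (RingHom.ker_ne_top _) (pointIdeal_le_ker_constantCoeff P)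

end PointIdeal

theorem symbPow_eq_iInf (Z : Finset (ProjLine × ProjLine)) (m : ℕ) :
    symbPow Z m = ⨅ P : Z, pointIdeal P ^ m :=
  iInf_subtype'

theorem exists_biForm_mem_symbPow (Z : Finset (ProjLine × ProjLine)) (m : ℕ) :
    ∃ t, ∃ F ∈ symbPow Z m, F ≠ 0 ∧ IsBiForm F t t := by
  refine ⟨∑ _P ∈ Z, m, ∏ P ∈ Z, rulingsForm P ^ m, ?_, ?_, ?_⟩
  · simp only [symbPow, Submodule.mem_iInf]
    exact fun P hP => Ideal.mem_of_dvd _ (Finset.dvd_prod_of_mem _ hP)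
      (Ideal.pow_mem_pow (rulingsForm_mem_pointIdeal P) m)
  · exact Finset.prod_ne_zero_iff.mpr fun P _ => pow_ne_zero m (rulingsForm_ne_zero P)
  · have h := IsWeightedHomogeneous.prod Z _ _ fun P _ => (isBiForm_rulingsForm P).pow m
    simpa [IsBiForm] using h

theorem exists_biForm_alphaStar {J : Ideal R4} (hJ : ∃ t, ∃ F ∈ J, F ≠ 0 ∧ IsBiForm F t t) :
    ∃ F ∈ J, F ≠ 0 ∧ IsBiForm F (alphaStar J) (alphaStar J) :=
  Nat.sInf_mem hJ

theorem alphaStar_le {J : Ideal R4} {F : R4} {t : ℕ} (hFJ : F ∈ J) (hF0 : F ≠ 0)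
    (hF : IsBiForm F t t) : alphaStar J ≤ t :=
  Nat.sInf_le ⟨F, hFJ, hF0, hF⟩

theorem alphaStar_no_two_consecutive_equalities_general {ι : Type*} (J : ι → Ideal R4)
    (hJ : ∃ k, J k ≠ ⊤) (m : ℕ)
    (hform : ∃ t, ∃ F ∈ ⨅ k, J k ^ (m + 2), F ≠ 0 ∧ IsBiForm F t t) :
    alphaStar (⨅ k, J k ^ m) < alphaStar (⨅ k, J k ^ (m + 2)) := by
  obtain ⟨F, hF, hF0, hdeg⟩ := exists_biForm_alphaStar hform
  obtain ⟨k, hk⟩ := hJ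
  have hFk : F ∈ J k := Ideal.pow_le_self (Nat.succ_ne_zero (m + 1))
    ((Submodule.mem_iInf _).mp hF k)
  generalize alphaStar (⨅ k, J k ^ (m + 2)) = s at hdeg ⊢
  cases s with
  | zero => exact absurd (hdeg.eq_top_of_mem hF0 hFk) hk
  | succ t =>
    obtain ⟨i, hG0, hG⟩ := hdeg.exists_pderiv_inl_ne_zero hF0
    obtain ⟨j, hH0, hH⟩ := hG.exists_pderiv_inr_ne_zero hG0
    have hmem : pderiv (Sum.inr j) (pderiv (Sum.inl i) F) ∈ ⨅ k, J k ^ m :=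
      derivation_apply_mem_iInf_pow _ J (derivation_apply_mem_iInf_pow _ J hF)
    exact Nat.lt_succ_of_le (alphaStar_le hmem hH0 hH)

/-- There is no (nonempty) finite set `Z` of distinct points of `ℙ¹ × ℙ¹` for whose radical
ideal `I` the equalities `α*(I^{(m+2)}) = α*(I^{(m+1)}) = α*(I^{(m)})` hold for some `m ≥ 1`;
equivalently, `α*(I^{(m+2)}) > α*(I^{(m)})` for every such `Z` and every `m ≥ 1`. -/
theorem alphaStar_no_two_consecutive_equalities (Z : Finset (ProjLine × ProjLine))
    (hZ : Z.Nonempty) (m : ℕ) (hm : 1 ≤ m) :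
    alphaStar (symbPow Z m) < alphaStar (symbPow Z (m + 2)) := by
  obtain ⟨P, hP⟩ := hZ
  simpa only [symbPow_eq_iInf] using alphaStar_no_two_consecutive_equalities_general
    (fun Q : Z => pointIdeal Q) ⟨⟨P, hP⟩, pointIdeal_ne_top P⟩ m
    (symbPow_eq_iInf Z (m + 2) ▸ exists_biForm_mem_symbPow Z (m + 2))
end
end

section
/- Let I be the radical ideal of an (a,b)-grid Z in X = ℙ¹×ℙ¹ with a, b ≥ 1. Then the jump function f(Z;m) = α*(I^{(m)}) − α*(I^{(m−1)}) takes the value 0 for infinitely many m and takes the value min{a,b} for infinitely many m. -/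
open MvPolynomial

noncomputable section

/-- The jump function `f(Z;m) = α*(I^{(m)}) - α*(I^{(m-1)})` for `m ≥ 1`
(note `symbPow Z 0 = ⊤`, so the convention `α*(I^{(0)}) = 0` holds automatically). -/
def jumpFun (Z : Finset (ProjLine × ProjLine)) (m : ℕ) : ℤ :=
  (alphaStar (symbPow Z m) : ℤ) - (alphaStar (symbPow Z (m - 1)) : ℤ)

/-!
Let `a`, `b` be the cardinalities of `Z_V`, `Z_H`. A nonzero form of bidegree `(p, q)` vanishing
to order `m` on the grid exists exactly when there are `i + j ≥ m` with `a * i ≤ p` and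
`b * j ≤ q`. For existence, take the product of the `i`-th powers of the vertical lines and the
`j`-th powers of the horizontal ones. Conversely, let `j` be the least multiplicity with which a
horizontal line of the grid divides the form, so that `b * j ≤ q`; dividing the corresponding line
out `j` times and restricting the quotient to it leaves a nonzero form of degree at most `p` in one
variable that vanishes to order `m - j` at `a` points.

Hence `α*(I^{(m)})` is the least `t` with `m ≤ t / a + t / b` (rounding down). Raising `t` by
`a * b` raises the right-hand side by `a + b`, so the jump function has period `a + b`, and it is
enough that it equals `min a b` at `1` and `0` at `a + b`.
-/

open scoped Polynomial Polynomial.Bivariate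

section Bivariate

theorem card_mul_le_natDegree {A : Type*} [CommRing A] [IsDomain A] {G : A[X]} {S : Finset A}
    {n : ℕ} (h : ∀ s ∈ S, n ≤ G.rootMultiplicity s) : S.card * n ≤ G.natDegree := by
  classical
  have hle : n • S.val ≤ G.roots := Multiset.le_iff_count.2 fun s => by
    by_cases hs : s ∈ S
    · simpa [Multiset.count_eq_one_of_mem S.nodup hs] using h s hs
    · simp [Multiset.count_eq_zero_of_notMem hs]
  simpa [mul_comm] using (Multiset.card_le_card hle).trans G.card_roots'

theorem coeff_taylor_rootMultiplicity_ne_zero {A : Type*} [CommRing A] {G : A[X]} (hG : G ≠ 0)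
    (t : A) : (Polynomial.taylor t G).coeff (G.rootMultiplicity t) ≠ 0 := by
  rw [Polynomial.rootMultiplicity_eq_natTrailingDegree, ← Polynomial.taylor_apply]
  exact Polynomial.trailingCoeff_nonzero_iff_nonzero.2 (mt (Polynomial.taylor_eq_zero t G).1 hG)

/- Substituting `h * X + t` for `X` turns both generators into multiples of `h`, while multiplying
the `j`-th Taylor coefficient at `t` by `h ^ j` only. -/
theorem pow_dvd_coeff_taylor {A : Type*} [CommRing A] [IsDomain A] {h t : A} (hh : h ≠ 0)
    {G : A[X]} {m : ℕ}
    (hG : G ∈ Ideal.span {Polynomial.C h, Polynomial.X - Polynomial.C t} ^ m) (j : ℕ) :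
    h ^ (m - j) ∣ (Polynomial.taylor t G).coeff j := by
  let φ : A[X] →+* A[X] := (Polynomial.compRingHom (Polynomial.C h * Polynomial.X)).comp
    (Polynomial.taylorAlgHom t)
  have hspan : (Ideal.span {Polynomial.C h, Polynomial.X - Polynomial.C t}).map φ ≤
      Ideal.span {Polynomial.C h} := by
    rw [Ideal.map_span, Set.image_pair, Ideal.span_le]
    rintro _ (rfl | rfl) <;> simp [φ, Ideal.mem_span_singleton]
  have hdvd : Polynomial.C (h ^ m) ∣ φ G := by
    have := Ideal.pow_right_mono hspan m (Ideal.map_pow φ _ m ▸ Ideal.mem_map_of_mem φ hG)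
    rwa [Ideal.span_singleton_pow, Ideal.mem_span_singleton, ← Polynomial.C_pow] at this
  have hcoeff : h ^ m ∣ (Polynomial.taylor t G).coeff j * h ^ j := by
    simpa [φ, Polynomial.comp_C_mul_X_coeff] using
      Polynomial.C_dvd_iff_dvd_coeff _ _ |>.1 hdvd j
  rcases le_total j m with hj | hj
  · rw [← Nat.sub_add_cancel hj, pow_add] at hcoeff
    exact (mul_dvd_mul_iff_right (pow_ne_zero j hh)).1 hcoeff
  · simp [Nat.sub_eq_zero_of_le hj]

theorem natDegree_coeff_taylor_C_le {R : Type*} [CommSemiring R] {G : R[X][Y]} {p : ℕ}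
    (hG : ∀ j, (G.coeff j).natDegree ≤ p) (t : R) (i : ℕ) :
    ((Polynomial.taylor (Polynomial.C t) G).coeff i).natDegree ≤ p := by
  rw [Polynomial.taylor_coeff, Polynomial.eval_eq_sum_range]
  refine Polynomial.natDegree_sum_le_of_forall_le _ _ fun j _ => ?_
  rw [Polynomial.hasseDeriv_coeff, ← Polynomial.C_pow, ← Polynomial.C_eq_natCast]
  exact (Polynomial.natDegree_mul_C_le _ _).trans
    ((Polynomial.natDegree_C_mul_le _ _).trans (hG _))

theorem exists_multiplicities_of_mem_pow {R : Type*} [CommRing R] [IsDomain R] {G : R[X][Y]}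
    (hG : G ≠ 0) {p q m : ℕ} (hX : ∀ j, (G.coeff j).natDegree ≤ p) (hY : G.natDegree ≤ q)
    (S T : Finset R)
    (hmem : ∀ s ∈ S, ∀ t ∈ T, G ∈ Ideal.span
      {Polynomial.C (Polynomial.X - Polynomial.C s), Y - Polynomial.C (Polynomial.C t)} ^ m) :
    ∃ i j, m ≤ i + j ∧ S.card * i ≤ p ∧ T.card * j ≤ q := by
  classical
  rcases T.eq_empty_or_nonempty with rfl | hT
  · exact ⟨0, m, by simp⟩
  obtain ⟨t, ht, hmin⟩ := T.exists_min_image (fun t => G.rootMultiplicity (Polynomial.C t)) hT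
  set j := G.rootMultiplicity (Polynomial.C t)
  have hcoeff : (Polynomial.taylor (Polynomial.C t) G).coeff j ≠ 0 :=
    coeff_taylor_rootMultiplicity_ne_zero hG _
  refine ⟨m - j, j, by omega, ?_, ?_⟩
  · refine (card_mul_le_natDegree fun s hs => ?_).trans (natDegree_coeff_taylor_C_le hX t j)
    rw [Polynomial.le_rootMultiplicity_iff hcoeff]
    exact pow_dvd_coeff_taylor (Polynomial.X_sub_C_ne_zero s) (hmem s hs t ht) j
  · rw [← Finset.card_image_of_injective T Polynomial.C_injective]
    exact (card_mul_le_natDegree (by simpa using hmin)).trans hY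

end Bivariate

section Chart

variable {R K : Type*} [CommSemiring R] [Field K]

/-- The line `x₀ = 1 + c x₁` of `R²`, parametrized by `x₁`: an affine chart of `ℙ¹` that misses
only the point `[c : 1]`. -/
def affineLine (c : R) : Fin 2 → R[X] := ![1 + Polynomial.C c * Polynomial.X, Polynomial.X]

/-- The coordinate of a point of `ℙ¹` in the chart `affineLine c`; it is `0`, by division by zero,
at the missing point `[c : 1]`. -/
def affineCoord (c : K) (v : Projectivization K (Fin 2 → K)) : K :=
  v.rep 1 / (v.rep 0 - c * v.rep 1)

theorem exists_forall_rep_sub_mul_ne_zero [Infinite K]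
    (S : Finset (Projectivization K (Fin 2 → K))) :
    ∃ c : K, ∀ v ∈ S, v.rep 0 - c * v.rep 1 ≠ 0 := by
  classical
  obtain ⟨c, hc⟩ := Infinite.exists_notMem_finset (S.image fun v => v.rep 0 / v.rep 1)
  refine ⟨c, fun v hv h => ?_⟩
  have h₁ : v.rep 1 ≠ 0 := fun h₁ => v.rep_nonzero <| by
    ext i
    fin_cases i
    · simpa [h₁] using h
    · exact h₁
  exact hc (Finset.mem_image.2 ⟨v, hv, (div_eq_iff h₁).2 (sub_eq_zero.1 h)⟩)

theorem affineCoord_injOn (c : K) :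
    Set.InjOn (affineCoord c) {v | v.rep 0 - c * v.rep 1 ≠ 0} := by
  intro v hv w hw h
  rw [affineCoord, affineCoord, div_eq_div_iff hv hw] at h
  rw [← v.mk_rep, ← w.mk_rep, Projectivization.mk_eq_mk_iff']
  refine ⟨(v.rep 0 - c * v.rep 1) / (w.rep 0 - c * w.rep 1), ?_⟩
  refine funext (Fin.forall_fin_two.2 ⟨?_, ?_⟩) <;>
    rw [Pi.smul_apply, smul_eq_mul, div_mul_eq_mul_div, div_eq_iff hw]
  · linear_combination (-c) * h
  · linear_combination -h

/-- The linear form vanishing at the point `v` of `ℙ¹`, in the variables `X (e 0)` and `X (e 1)`;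
`pointIdeal` is generated by two such forms. -/
def pointForm {σ : Type*} (e : Fin 2 → σ) (v : Projectivization K (Fin 2 → K)) :
    MvPolynomial σ K :=
  C (v.rep 1) * X (e 0) - C (v.rep 0) * X (e 1)

theorem pointForm_ne_zero {σ : Type*} {e : Fin 2 → σ} (he : Function.Injective e)
    (v : Projectivization K (Fin 2 → K)) : pointForm e v ≠ 0 := by
  intro h
  have hv (x : Fin 2 → K) : v.rep 1 * x 0 - v.rep 0 * x 1 = 0 := by
    simpa [pointForm, he.extend_apply] using congrArg (eval (Function.extend e x 0)) h
  refine v.rep_nonzero (funext fun i => ?_)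
  fin_cases i
  · simpa using hv ![0, 1]
  · simpa using hv ![1, 0]

theorem pointForm_isWeightedHomogeneous {σ M : Type*} [AddCommMonoid M] {w : σ → M}
    {e : Fin 2 → σ} {n : M} (hw : ∀ i, w (e i) = n) (v : Projectivization K (Fin 2 → K)) :
    IsWeightedHomogeneous w (pointForm e v) n :=
  have hX (i : Fin 2) : IsWeightedHomogeneous w (X (e i) : MvPolynomial σ K) n :=
    hw i ▸ isWeightedHomogeneous_X K w (e i)
  ((hX 0).C_mul _).sub ((hX 1).C_mul _)

theorem aeval_affineLine_pointForm {c : K} {v : Projectivization K (Fin 2 → K)}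
    (hv : v.rep 0 - c * v.rep 1 ≠ 0) :
    aeval (affineLine c) (pointForm id v) =
      Polynomial.C (-(v.rep 0 - c * v.rep 1)) *
        (Polynomial.X - Polynomial.C (affineCoord c v)) := by
  have hcoord : Polynomial.C (v.rep 0 - c * v.rep 1) * Polynomial.C (affineCoord c v) =
      Polynomial.C (v.rep 1) := by
    rw [← Polynomial.C_mul, affineCoord, mul_div_cancel₀ _ hv]
  simp only [pointForm, affineLine, map_sub, map_mul, map_neg, aeval_X, aeval_C, id,
    Polynomial.algebraMap_eq, Matrix.cons_val_zero, Matrix.cons_val_one] at hcoord ⊢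
  linear_combination -hcoord

theorem natDegree_prod_affineLine_pow_le (c : R) (n : Fin 2 → ℕ) :
    (∏ i, affineLine c i ^ n i).natDegree ≤ n 0 + n 1 := by
  simp only [affineLine, Fin.prod_univ_two, Matrix.cons_val_zero, Matrix.cons_val_one]
  compute_degree

/-- Restriction of polynomials on `R² × R²` to the product of two affine lines, the affine chart of
`ℙ¹ × ℙ¹` given by `affineLine c` and `affineLine d`. -/
def chart (c d : R) : MvPolynomial (Fin 2 ⊕ Fin 2) R →ₐ[R] R[X][Y] :=
  aeval (Sum.elim (fun i => Polynomial.C (affineLine c i))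
    (fun i => (affineLine d i).map Polynomial.C))

theorem chart_monomial (c d : R) (s : Fin 2 ⊕ Fin 2 →₀ ℕ) (r : R) :
    chart c d (monomial s r) =
      Polynomial.C (Polynomial.C r * ∏ i, affineLine c i ^ s (Sum.inl i)) *
        (∏ i, affineLine d i ^ s (Sum.inr i)).map Polynomial.C := by
  rw [chart, aeval_monomial, Finsupp.prod_fintype _ _ (by simp), Fintype.prod_sum_type]
  simp [Polynomial.algebraMap_apply, mul_assoc]

theorem chart_pointForm_inl {c d : K} {v : Projectivization K (Fin 2 → K)}
    (hv : v.rep 0 - c * v.rep 1 ≠ 0) :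
    chart c d (pointForm Sum.inl v) = Polynomial.C (Polynomial.C (-(v.rep 0 - c * v.rep 1))) *
      Polynomial.C (Polynomial.X - Polynomial.C (affineCoord c v)) := by
  rw [← Polynomial.C_mul, ← aeval_affineLine_pointForm hv]
  simp [chart, pointForm, Polynomial.algebraMap_apply]

theorem chart_pointForm_inr {c d : K} {w : Projectivization K (Fin 2 → K)}
    (hw : w.rep 0 - d * w.rep 1 ≠ 0) :
    chart c d (pointForm Sum.inr w) = Polynomial.C (Polynomial.C (-(w.rep 0 - d * w.rep 1))) *
      (Y - Polynomial.C (Polynomial.C (affineCoord d w))) := by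
  have := congrArg (Polynomial.map Polynomial.C) (aeval_affineLine_pointForm hw)
  simpa [chart, pointForm, Polynomial.algebraMap_apply] using this

theorem evalEval_chart (c d x y : R) (F : MvPolynomial (Fin 2 ⊕ Fin 2) R) :
    (chart c d F).evalEval x y =
      eval (Sum.elim (fun i => (affineLine c i).eval x) (fun i => (affineLine d i).eval y)) F := by
  rw [← Polynomial.coe_evalEvalRingHom, chart, map_aeval, eval]
  refine eval₂Hom_congr ?_ ?_ rfl
  · ext r
    simp [Polynomial.algebraMap_apply]
  · ext (i | i)
    · simp
    · simp

theorem sum_exponents_of_coeff_ne_zero {F : MvPolynomial (Fin 2 ⊕ Fin 2) R} {p q : ℕ}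
    (hF : IsWeightedHomogeneous biWeight F (p, q)) {s : Fin 2 ⊕ Fin 2 →₀ ℕ} (hs : coeff s F ≠ 0) :
    s (Sum.inl 0) + s (Sum.inl 1) = p ∧ s (Sum.inr 0) + s (Sum.inr 1) = q := by
  have h := hF hs
  rw [Finsupp.weight_apply, Finsupp.sum_fintype _ _ (by simp)] at h
  simpa [biWeight, Prod.ext_iff] using h

theorem eval_smul_smul {F : MvPolynomial (Fin 2 ⊕ Fin 2) R} {p q : ℕ}
    (hF : IsWeightedHomogeneous biWeight F (p, q)) (l n : R) (x y : Fin 2 → R) :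
    eval (Sum.elim (l • x) (n • y)) F = l ^ p * n ^ q * eval (Sum.elim x y) F := by
  rw [eval_eq', eval_eq', Finset.mul_sum]
  refine Finset.sum_congr rfl fun s hs => ?_
  obtain ⟨rfl, rfl⟩ := sum_exponents_of_coeff_ne_zero hF (mem_support_iff.1 hs)
  simp only [Fintype.prod_sum_type, Fin.prod_univ_two, Sum.elim_inl, Sum.elim_inr, Pi.smul_apply,
    smul_eq_mul]
  ring

theorem natDegree_coeff_chart_le {F : MvPolynomial (Fin 2 ⊕ Fin 2) R} {p q : ℕ}
    (hF : IsWeightedHomogeneous biWeight F (p, q)) (c d : R) (j : ℕ) :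
    ((chart c d F).coeff j).natDegree ≤ p := by
  rw [F.as_sum, map_sum, Polynomial.finsetSum_coeff]
  refine Polynomial.natDegree_sum_le_of_forall_le _ _ fun s hs => ?_
  obtain ⟨rfl, -⟩ := sum_exponents_of_coeff_ne_zero hF (mem_support_iff.1 hs)
  rw [chart_monomial, Polynomial.coeff_C_mul, Polynomial.coeff_map]
  exact (Polynomial.natDegree_mul_C_le _ _).trans <| (Polynomial.natDegree_C_mul_le _ _).trans <|
    natDegree_prod_affineLine_pow_le c fun i => s (Sum.inl i)

theorem natDegree_chart_le {F : MvPolynomial (Fin 2 ⊕ Fin 2) R} {p q : ℕ}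
    (hF : IsWeightedHomogeneous biWeight F (p, q)) (c d : R) : (chart c d F).natDegree ≤ q := by
  rw [F.as_sum, map_sum]
  refine Polynomial.natDegree_sum_le_of_forall_le _ _ fun s hs => ?_
  obtain ⟨-, rfl⟩ := sum_exponents_of_coeff_ne_zero hF (mem_support_iff.1 hs)
  rw [chart_monomial]
  exact (Polynomial.natDegree_C_mul_le _ _).trans <| Polynomial.natDegree_map_le.trans <|
    natDegree_prod_affineLine_pow_le d fun i => s (Sum.inr i)

theorem eval_affineLine_inv_smul {c : K} {x : Fin 2 → K} (hx : x 0 - c * x 1 ≠ 0) (i : Fin 2) :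
    (affineLine c i).eval (((x 0 - c * x 1)⁻¹ • x) 1) = ((x 0 - c * x 1)⁻¹ • x) i := by
  fin_cases i
  · simp only [affineLine, Fin.zero_eta, Matrix.cons_val_zero, Polynomial.eval_add,
      Polynomial.eval_one, Polynomial.eval_mul, Polynomial.eval_C, Polynomial.eval_X,
      Pi.smul_apply, smul_eq_mul]
    field_simp
    ring
  · simp [affineLine]

theorem X_sub_C_mul_X_ne_zero {σ A : Type*} [CommRing A] [Nontrivial A] {i j : σ} (hij : i ≠ j)
    (c : A) : (X i - C c * X j : MvPolynomial σ A) ≠ 0 := by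
  classical
  intro h
  simpa [hij.symm] using congrArg (eval (Pi.single i 1)) h

theorem chart_ne_zero [Infinite K] {F : MvPolynomial (Fin 2 ⊕ Fin 2) K} {p q : ℕ}
    (hF : IsWeightedHomogeneous biWeight F (p, q)) (hF0 : F ≠ 0) (c d : K) : chart c d F ≠ 0 := by
  have hprod : F * (X (Sum.inl 0) - C c * X (Sum.inl 1)) *
      (X (Sum.inr 0) - C d * X (Sum.inr 1)) ≠ 0 :=
    mul_ne_zero (mul_ne_zero hF0 (X_sub_C_mul_X_ne_zero (by simp) c))
      (X_sub_C_mul_X_ne_zero (by simp) d)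
  obtain ⟨z, hz⟩ : ∃ z, eval z (F * (X (Sum.inl 0) - C c * X (Sum.inl 1)) *
      (X (Sum.inr 0) - C d * X (Sum.inr 1))) ≠ 0 := by
    by_contra! h
    exact hprod (MvPolynomial.funext (by simpa using h))
  obtain ⟨x, y, rfl⟩ : ∃ x y, z = Sum.elim x y := ⟨_, _, (Sum.elim_comp_inl_inr z).symm⟩
  simp only [map_mul, map_sub, eval_X, eval_C, Sum.elim_inl, Sum.elim_inr, mul_ne_zero_iff] at hz
  obtain ⟨⟨hFz, hx⟩, hy⟩ := hz
  intro h
  have heval := evalEval_chart c d (((x 0 - c * x 1)⁻¹ • x) 1) (((y 0 - d * y 1)⁻¹ • y) 1) F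
  simp only [h, Polynomial.evalEval_zero, eval_affineLine_inv_smul hx,
    eval_affineLine_inv_smul hy, eval_smul_smul hF] at heval
  exact mul_ne_zero (mul_ne_zero (pow_ne_zero p (inv_ne_zero hx)) (pow_ne_zero q (inv_ne_zero hy)))
    hFz heval.symm

end Chart

section Grid

theorem exists_multiplicities_of_mem_symbPow {ZV ZH : Finset ProjLine} {m p q : ℕ} {F : R4}
    (hmem : F ∈ symbPow (ZV ×ˢ ZH) m) (hF0 : F ≠ 0) (hF : IsBiForm F p q) :
    ∃ i j, m ≤ i + j ∧ ZV.card * i ≤ p ∧ ZH.card * j ≤ q := by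
  classical
  obtain ⟨c, hc⟩ := exists_forall_rep_sub_mul_ne_zero ZV
  obtain ⟨d, hd⟩ := exists_forall_rep_sub_mul_ne_zero ZH
  rw [← Finset.card_image_of_injOn ((affineCoord_injOn c).mono hc),
    ← Finset.card_image_of_injOn ((affineCoord_injOn d).mono hd)]
  refine exists_multiplicities_of_mem_pow (chart_ne_zero hF hF0 c d)
    (natDegree_coeff_chart_le hF c d) (natDegree_chart_le hF c d) _ _ ?_
  simp only [Finset.forall_mem_image]
  intro v hv w hw
  have hpoint : (pointIdeal (v, w)).map (chart c d) ≤ Ideal.span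
      {Polynomial.C (Polynomial.X - Polynomial.C (affineCoord c v)),
        Y - Polynomial.C (Polynomial.C (affineCoord d w))} := by
    change (Ideal.span {pointForm Sum.inl v, pointForm Sum.inr w}).map (chart c d) ≤ _
    rw [Ideal.map_span, Set.image_pair, Ideal.span_le, chart_pointForm_inl (hc v hv),
      chart_pointForm_inr (hd w hw), Set.pair_subset_iff]
    exact ⟨Ideal.mul_mem_left _ _ (Ideal.subset_span (Set.mem_insert _ _)),
      Ideal.mul_mem_left _ _ (Ideal.subset_span (Set.mem_insert_of_mem _ rfl))⟩
  have hFvw : F ∈ pointIdeal (v, w) ^ m := by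
    simp only [symbPow, Submodule.mem_iInf] at hmem
    exact hmem (v, w) (Finset.mk_mem_product hv hw)
  exact Ideal.pow_right_mono hpoint m
    (Ideal.map_pow (chart c d) _ m ▸ Ideal.mem_map_of_mem (chart c d) hFvw)

/-- The form cutting out the vertical lines through the grid with multiplicity `i` and the
horizontal ones with multiplicity `j`. -/
def gridForm (ZV ZH : Finset ProjLine) (i j : ℕ) : R4 :=
  (∏ v ∈ ZV, pointForm Sum.inl v) ^ i * (∏ w ∈ ZH, pointForm Sum.inr w) ^ j

theorem gridForm_ne_zero (ZV ZH : Finset ProjLine) (i j : ℕ) : gridForm ZV ZH i j ≠ 0 :=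
  mul_ne_zero
    (pow_ne_zero _ (Finset.prod_ne_zero_iff.2 fun v _ => pointForm_ne_zero Sum.inl_injective v))
    (pow_ne_zero _ (Finset.prod_ne_zero_iff.2 fun w _ => pointForm_ne_zero Sum.inr_injective w))

theorem gridForm_isBiForm (ZV ZH : Finset ProjLine) (i j : ℕ) :
    IsBiForm (gridForm ZV ZH i j) (ZV.card * i) (ZH.card * j) := by
  have hX (i : Fin 2) : biWeight (Sum.inl i) = (1, 0) := rfl
  have hY (i : Fin 2) : biWeight (Sum.inr i) = (0, 1) := rfl
  have hV := IsWeightedHomogeneous.prod ZV (pointForm Sum.inl) (fun _ => (1, 0))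
    fun v _ => pointForm_isWeightedHomogeneous hX v
  have hH := IsWeightedHomogeneous.prod ZH (pointForm Sum.inr) (fun _ => (0, 1))
    fun w _ => pointForm_isWeightedHomogeneous hY w
  simpa [IsBiForm, gridForm, mul_comm] using (hV.pow i).mul (hH.pow j)

theorem gridForm_mem_symbPow (ZV ZH : Finset ProjLine) (i j : ℕ) :
    gridForm ZV ZH i j ∈ symbPow (ZV ×ˢ ZH) (i + j) := by
  simp only [symbPow, Submodule.mem_iInf]
  rintro ⟨v, w⟩ hvw
  obtain ⟨hv, hw⟩ := Finset.mem_product.1 hvw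
  rw [pow_add]
  refine Ideal.mul_mem_mul (Ideal.pow_mem_pow ?_ i) (Ideal.pow_mem_pow ?_ j)
  · exact Ideal.mem_of_dvd _ (Finset.dvd_prod_of_mem _ hv) (Ideal.subset_span (Set.mem_insert _ _))
  · exact Ideal.mem_of_dvd _ (Finset.dvd_prod_of_mem _ hw)
      (Ideal.subset_span (Set.mem_insert_of_mem _ rfl))

theorem symbPow_antitone (Z : Finset (ProjLine × ProjLine)) : Antitone (symbPow Z) :=
  fun _ _ h => iInf₂_mono fun _ _ => Ideal.pow_le_pow_right h

theorem exists_isBiForm_mem_mono {J : Ideal R4} {p q p' q' : ℕ} (hp : p ≤ p') (hq : q ≤ q')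
    (h : ∃ F ∈ J, F ≠ 0 ∧ IsBiForm F p q) : ∃ F ∈ J, F ≠ 0 ∧ IsBiForm F p' q' := by
  obtain ⟨F, hFJ, hF0, hF⟩ := h
  refine ⟨F * (X (Sum.inl 0) ^ (p' - p) * X (Sum.inr 0) ^ (q' - q)), J.mul_mem_right _ hFJ,
    mul_ne_zero hF0 (mul_ne_zero (pow_ne_zero _ (X_ne_zero _)) (pow_ne_zero _ (X_ne_zero _))), ?_⟩
  have hX := (isWeightedHomogeneous_X ℂ biWeight (Sum.inl 0)).pow (p' - p)
  have hY := (isWeightedHomogeneous_X ℂ biWeight (Sum.inr 0)).pow (q' - q)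
  simpa [IsBiForm, biWeight, hp, hq] using IsWeightedHomogeneous.mul hF (hX.mul hY)

theorem exists_isBiForm_mem_symbPow_grid_iff {ZV ZH : Finset ProjLine} {m p q : ℕ} :
    (∃ F ∈ symbPow (ZV ×ˢ ZH) m, F ≠ 0 ∧ IsBiForm F p q) ↔
      ∃ i j, m ≤ i + j ∧ ZV.card * i ≤ p ∧ ZH.card * j ≤ q := by
  constructor
  · rintro ⟨F, hmem, hF0, hF⟩
    exact exists_multiplicities_of_mem_symbPow hmem hF0 hF
  · rintro ⟨i, j, hm, hp, hq⟩
    exact exists_isBiForm_mem_mono hp hq ⟨gridForm ZV ZH i j,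
      symbPow_antitone _ hm (gridForm_mem_symbPow ZV ZH i j), gridForm_ne_zero ZV ZH i j,
      gridForm_isBiForm ZV ZH i j⟩

end Grid

section FloorSum

variable {a b : ℕ}

theorem exists_mul_le_iff_le_div_add_div (ha : 0 < a) (hb : 0 < b) {m t : ℕ} :
    (∃ i j, m ≤ i + j ∧ a * i ≤ t ∧ b * j ≤ t) ↔ m ≤ t / a + t / b := by
  constructor
  · rintro ⟨i, j, hm, hi, hj⟩
    rw [mul_comm, ← Nat.le_div_iff_mul_le ha] at hi
    rw [mul_comm, ← Nat.le_div_iff_mul_le hb] at hj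
    exact hm.trans (add_le_add hi hj)
  · exact fun h => ⟨t / a, t / b, h, Nat.mul_div_le t a, Nat.mul_div_le t b⟩

theorem div_add_div_add_mul (ha : 0 < a) (hb : 0 < b) (t : ℕ) :
    (t + a * b) / a + (t + a * b) / b = t / a + t / b + (a + b) := by
  rw [Nat.add_mul_div_left _ _ ha, Nat.add_mul_div_right _ _ hb]
  ring

theorem div_add_div_add_two_le {t : ℕ} (ht : t < a * b) : t / a + t / b + 2 ≤ a + b := by
  have hta : t / a < b := Nat.div_lt_of_lt_mul ht
  have htb : t / b < a := Nat.div_lt_of_lt_mul (mul_comm a b ▸ ht)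
  omega

theorem isLeast_one_le_div_add_div (ha : 0 < a) (hb : 0 < b) :
    IsLeast {t | 1 ≤ t / a + t / b} (min a b) := by
  have hpos (t : ℕ) : 1 ≤ t / a + t / b ↔ min a b ≤ t := by
    rw [Nat.one_le_iff_ne_zero, ne_eq, Nat.add_eq_zero_iff, Nat.div_eq_zero_iff_lt ha,
      Nat.div_eq_zero_iff_lt hb]
    omega
  simpa only [hpos] using! isLeast_Ici

theorem isLeast_pred_add_le_div_add_div (ha : 0 < a) (hb : 0 < b) :
    IsLeast {t | a + b - 1 ≤ t / a + t / b} (a * b) := by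
  constructor
  · simp [Nat.mul_div_cancel_left b ha, Nat.mul_div_cancel a hb, add_comm]
  · intro t (ht : a + b - 1 ≤ t / a + t / b)
    by_contra! hlt
    have := div_add_div_add_two_le hlt
    omega

theorem isLeast_add_period_le_div_add_div (ha : 0 < a) (hb : 0 < b) {m t : ℕ}
    (ht : IsLeast {s | m ≤ s / a + s / b} t) :
    IsLeast {s | m + (a + b) ≤ s / a + s / b} (t + a * b) := by
  constructor
  · change m + (a + b) ≤ (t + a * b) / a + (t + a * b) / b
    rw [div_add_div_add_mul ha hb]
    exact Nat.add_le_add_right ht.1 _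
  · intro s (hs : m + (a + b) ≤ s / a + s / b)
    rcases lt_or_ge s (a * b) with hlt | hge
    · have := div_add_div_add_two_le hlt
      omega
    · obtain ⟨r, rfl⟩ := Nat.exists_eq_add_of_le' hge
      rw [div_add_div_add_mul ha hb] at hs
      exact Nat.add_le_add_right (ht.2 (Nat.le_of_add_le_add_right hs)) _

end FloorSum

section Jump

variable {ZV ZH : Finset ProjLine}

theorem isLeast_alphaStar_grid (hV : ZV.Nonempty) (hH : ZH.Nonempty) (m : ℕ) :
    IsLeast {t | m ≤ t / ZV.card + t / ZH.card} (alphaStar (symbPow (ZV ×ˢ ZH) m)) := by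
  have hset : {t | ∃ F ∈ symbPow (ZV ×ˢ ZH) m, F ≠ 0 ∧ IsBiForm F t t} =
      {t | m ≤ t / ZV.card + t / ZH.card} := Set.ext fun _ =>
    exists_isBiForm_mem_symbPow_grid_iff.trans
      (exists_mul_le_iff_le_div_add_div hV.card_pos hH.card_pos)
  have hne : {t | m ≤ t / ZV.card + t / ZH.card}.Nonempty :=
    ⟨m * ZV.card, by simp [Nat.mul_div_cancel m hV.card_pos]⟩
  rw [alphaStar, hset]
  exact ⟨Nat.sInf_mem hne, fun _ ht => Nat.sInf_le ht⟩

theorem alphaStar_grid_add_period (hV : ZV.Nonempty) (hH : ZH.Nonempty) (m : ℕ) :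
    alphaStar (symbPow (ZV ×ˢ ZH) (m + (ZV.card + ZH.card))) =
      alphaStar (symbPow (ZV ×ˢ ZH) m) + ZV.card * ZH.card :=
  (isLeast_alphaStar_grid hV hH _).unique <|
    isLeast_add_period_le_div_add_div hV.card_pos hH.card_pos (isLeast_alphaStar_grid hV hH m)

theorem alphaStar_grid_zero (hV : ZV.Nonempty) (hH : ZH.Nonempty) :
    alphaStar (symbPow (ZV ×ˢ ZH) 0) = 0 :=
  Nat.le_zero.1 ((isLeast_alphaStar_grid hV hH 0).2 (Nat.zero_le _))

theorem jumpFun_grid_one (hV : ZV.Nonempty) (hH : ZH.Nonempty) :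
    jumpFun (ZV ×ˢ ZH) 1 = min (ZV.card : ℤ) ZH.card := by
  rw [jumpFun, (isLeast_alphaStar_grid hV hH 1).unique
    (isLeast_one_le_div_add_div hV.card_pos hH.card_pos), Nat.sub_self,
    alphaStar_grid_zero hV hH]
  simp

theorem jumpFun_grid_period (hV : ZV.Nonempty) (hH : ZH.Nonempty) :
    jumpFun (ZV ×ˢ ZH) (ZV.card + ZH.card) = 0 := by
  have htop := alphaStar_grid_add_period hV hH 0
  rw [alphaStar_grid_zero hV hH, zero_add, zero_add] at htop
  rw [jumpFun, htop, (isLeast_alphaStar_grid hV hH _).unique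
    (isLeast_pred_add_le_div_add_div hV.card_pos hH.card_pos), sub_self]

theorem jumpFun_grid_succ_periodic (hV : ZV.Nonempty) (hH : ZH.Nonempty) :
    Function.Periodic (fun m => jumpFun (ZV ×ˢ ZH) (m + 1)) (ZV.card + ZH.card) := by
  intro m
  change jumpFun _ (m + (ZV.card + ZH.card) + 1) = jumpFun _ (m + 1)
  rw [jumpFun, jumpFun, Nat.add_sub_cancel, Nat.add_sub_cancel, add_right_comm,
    alphaStar_grid_add_period hV hH, alphaStar_grid_add_period hV hH]
  push_cast
  ring

theorem infinite_setOf_eq_of_periodic {α : Type*} {f : ℕ → α} {c : ℕ}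
    (hf : Function.Periodic f c) (hc : 0 < c) (n : ℕ) : {m | f m = f n}.Infinite := by
  refine Set.infinite_of_injective_forall_mem (f := fun k => n + k • c) ?_ fun k => hf.nsmul k n
  exact (add_right_injective n).comp (mul_left_injective₀ hc.ne')

theorem infinite_setOf_jumpFun_grid_eq (hV : ZV.Nonempty) (hH : ZH.Nonempty) {n : ℕ}
    (hn : 1 ≤ n) : {m | 1 ≤ m ∧ jumpFun (ZV ×ˢ ZH) m = jumpFun (ZV ×ˢ ZH) n}.Infinite := by
  obtain ⟨n, rfl⟩ := Nat.exists_eq_add_of_le' hn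
  have hinf := infinite_setOf_eq_of_periodic (jumpFun_grid_succ_periodic hV hH)
    (Nat.add_pos_left hV.card_pos _) n
  refine (hinf.image (add_left_injective 1).injOn).mono ?_
  rintro _ ⟨m, hm, rfl⟩
  exact ⟨Nat.le_add_left 1 m, hm⟩

end Jump

/-- For an `(a,b)`-grid `Z = Z_V × Z_H` in `ℙ¹ × ℙ¹` with `a, b ≥ 1`, the jump function
`f(Z;m) = α*(I^{(m)}) - α*(I^{(m-1)})` takes the value `0` for infinitely many `m ≥ 1`
and the value `min{a,b}` for infinitely many `m ≥ 1`. -/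
theorem grid_jumpFun_values (a b : ℕ) (ha : 1 ≤ a) (hb : 1 ≤ b)
    (ZV ZH : Finset ProjLine) (hV : ZV.card = a) (hH : ZH.card = b) :
    {m : ℕ | 1 ≤ m ∧ jumpFun (ZV ×ˢ ZH) m = 0}.Infinite ∧
    {m : ℕ | 1 ≤ m ∧ jumpFun (ZV ×ˢ ZH) m = (min a b : ℤ)}.Infinite := by
  subst hV hH
  have hV : ZV.Nonempty := Finset.card_pos.1 ha
  have hH : ZH.Nonempty := Finset.card_pos.1 hb
  constructor
  · rw [← jumpFun_grid_period hV hH]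
    exact infinite_setOf_jumpFun_grid_eq hV hH (Nat.le_add_right_of_le ha)
  · rw [← jumpFun_grid_one hV hH]
    exact infinite_setOf_jumpFun_grid_eq hV hH le_rfl
end
end

section
/- Let Z be an (a,b)-grid in X = ℙ¹×ℙ¹ with 1 ≤ a ≤ b, let I be its radical ideal and f(Z;m) its jump function. Then a = f(Z;1), the set {j ≥ 1 : f(Z;j) < a} is nonempty, and for r = min{j : f(Z;j) < a} one has b = Σ_{i=1}^{r} f(Z;i). In particular the grid parameters (a,b) can be recovered from the jump function. -/
open MvPolynomial

noncomputable section

/-!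
Write `a = #ZV`, `b = #ZH` and `I = I(ZV × ZH)`. Powers of the product of the `a` vertical linear
forms and of the `b` horizontal ones show `α*(I^(i+j)) ≤ max (a * i) (b * j)`. Conversely, a nonzero
binary form vanishing to order `m` at `n` points of `ℙ¹` has degree at least `n * m`. So let
`F ∈ I^(m)` have bidegree `(p, q)` with `p < a * m` and `q < b`: for `h ∈ ZH` the form `F(x, h)`
vanishes to order `m` on `ZV`, hence is zero; then every `F(u, y)` vanishes on `ZH`, hence is zero
too. This gives `min (a * m) b ≤ α*(I^(m))`. The value of `α*` therefore climbs in steps of `a`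
up to `m = b / a` and is exactly `b` at `m = b / a + 1`, where the jump is `b % a < a`.
-/

open scoped LinearAlgebra.Projectivization

theorem isWeightedHomogeneous_aeval {R σ τ M N : Type*} [CommSemiring R] [AddCommMonoid M]
    [AddCommMonoid N] {w : σ → M} {w' : τ → N} (φ : M →+ N) {g : σ → MvPolynomial τ R}
    (hg : ∀ i, IsWeightedHomogeneous w' (g i) (φ (w i))) {F : MvPolynomial σ R} {n : M}
    (hF : IsWeightedHomogeneous w F n) : IsWeightedHomogeneous w' (aeval g F) (φ n) := by
  rw [aeval_def, eval₂_eq]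
  refine IsWeightedHomogeneous.sum _ _ _ fun d hd => ?_
  have hprod := (IsWeightedHomogeneous.prod d.support _ _ fun i _ => (hg i).pow (d i)).C_mul
    (F.coeff d)
  rwa [← hF (mem_support_iff.mp hd), Finsupp.weight_apply, map_finsuppSum, Finsupp.sum,
    Finset.sum_congr rfl fun i _ => map_nsmul φ (d i) (w i)]

theorem aeval_mul_of_isHomogeneous {R σ A : Type*} [CommSemiring R] [CommSemiring A] [Algebra R A]
    {G : MvPolynomial σ R} {n : ℕ} (hG : G.IsHomogeneous n) (c : A) (g : σ → A) :
    aeval (fun i => c * g i) G = c ^ n * aeval g G := by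
  simp only [aeval_def, eval₂_eq, Finset.mul_sum]
  refine Finset.sum_congr rfl fun d hd => ?_
  have hdeg : ∑ i ∈ d.support, d i = n := (hG.degree_eq_sum_deg_support hd).symm
  rw [← hdeg, ← Finset.prod_pow_eq_pow_sum]
  simp only [mul_pow, Finset.prod_mul_distrib]
  ring

section LinForm

variable {K : Type*} [Field K]

/-- The linear form `b·X₀ - a·X₁` cutting out the point `v = [a:b]` of `ℙ¹`, written with the
representative `v.rep`; another choice would rescale it. -/
def linForm (v : ℙ K (Fin 2 → K)) : MvPolynomial (Fin 2) K :=
  C (v.rep 1) * X 0 - C (v.rep 0) * X 1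

theorem isHomogeneous_linForm (v : ℙ K (Fin 2 → K)) : (linForm v).IsHomogeneous 1 :=
  (isHomogeneous_C_mul_X _ _).sub (isHomogeneous_C_mul_X _ _)

theorem eval_rep_linForm_eq_zero_iff (v w : ℙ K (Fin 2 → K)) :
    eval w.rep (linForm v) = 0 ↔ v = w := by
  have hdet : eval w.rep (linForm v) = -(Matrix.of (Projectivization.rep ∘ ![v, w])).det := by
    simp [linForm, Matrix.det_fin_two]
  rw [hdet, neg_eq_zero, ← Projectivization.dependent_pair_iff_eq,
    Projectivization.dependent_iff, ← not_iff_not, not_not, ← ne_eq, ← isUnit_iff_ne_zero,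
    ← Matrix.isUnit_iff_isUnit_det, ← Matrix.linearIndependent_rows_iff_isUnit]
  rfl

theorem eval_rep_linForm_self (v : ℙ K (Fin 2 → K)) : eval v.rep (linForm v) = 0 :=
  (eval_rep_linForm_eq_zero_iff v v).mpr rfl

theorem linForm_ne_zero (v : ℙ K (Fin 2 → K)) : linForm v ≠ 0 := by
  intro h
  refine v.rep_nonzero (funext fun i => ?_)
  fin_cases i
  · simpa [linForm] using congrArg (eval ![0, 1]) h
  · simpa [linForm] using congrArg (eval ![1, 0]) h

theorem irreducible_linForm (v : ℙ K (Fin 2 → K)) : Irreducible (linForm v) := by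
  refine irreducible_of_totalDegree_eq_one
    ((isHomogeneous_linForm v).totalDegree (linForm_ne_zero v)) fun c hc => ?_
  rw [isUnit_iff_ne_zero]
  rintro rfl
  exact linForm_ne_zero v (MvPolynomial.ext _ _ fun d => zero_dvd_iff.mp (hc d))

theorem isRelPrime_linForm {v w : ℙ K (Fin 2 → K)} (hvw : v ≠ w) :
    IsRelPrime (linForm v) (linForm w) := by
  refine (irreducible_linForm v).isRelPrime_iff_not_dvd.mpr fun hdvd => hvw.symm ?_
  rw [← eval_rep_linForm_eq_zero_iff]
  exact eq_zero_of_zero_dvd <| eval_rep_linForm_self v ▸ map_dvd (eval v.rep) hdvd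

/-- Modulo `linForm v` the vectors `(v₀, v₁)` and `(X₀, X₁)` are proportional, so
`vᵢ ^ p * G(X) = Xᵢ ^ p * G(v)`. -/
theorem linForm_dvd_of_eval_rep_eq_zero {G : MvPolynomial (Fin 2) K} {p : ℕ}
    (hG : G.IsHomogeneous p) {v : ℙ K (Fin 2 → K)} (hv : eval v.rep G = 0) : linForm v ∣ G := by
  let A := MvPolynomial (Fin 2) K ⧸ Ideal.span {linForm v}
  let π : MvPolynomial (Fin 2) K →ₐ[K] A := Ideal.Quotient.mkₐ K _
  have hrel : algebraMap K A (v.rep 1) * π (X 0) = algebraMap K A (v.rep 0) * π (X 1) :=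
    Ideal.Quotient.eq.mpr (Ideal.mem_span_singleton_self (linForm v))
  have hswap (i j : Fin 2) :
      algebraMap K A (v.rep i) * π (X j) = π (X i) * algebraMap K A (v.rep j) :=
    match i, j with
    | 0, 0 | 1, 1 => mul_comm _ _
    | 0, 1 => hrel.symm.trans (mul_comm _ _)
    | 1, 0 => hrel.trans (mul_comm _ _)
  have hscaled (i : Fin 2) : algebraMap K A (v.rep i) ^ p * π G = 0 := by
    calc algebraMap K A (v.rep i) ^ p * π G
        = algebraMap K A (v.rep i) ^ p * aeval (fun j => π (X j)) G := by
          rw [← comp_aeval_apply, aeval_X_left_apply]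
      _ = aeval (fun j => π (X i) * algebraMap K A (v.rep j)) G := by
          simp only [← aeval_mul_of_isHomogeneous hG, hswap]
      _ = π (X i) ^ p * algebraMap K A (eval v.rep G) := by
          rw [aeval_mul_of_isHomogeneous hG]
          exact congrArg _ (aeval_algebraMap_apply A v.rep G)
      _ = 0 := by rw [hv, map_zero, mul_zero]
  obtain ⟨i, hi⟩ := Function.ne_iff.mp v.rep_nonzero
  have hunit : IsUnit (algebraMap K A (v.rep i) ^ p) :=
    ((isUnit_iff_ne_zero.mpr hi).map (algebraMap K A)).pow p
  rw [← Ideal.mem_span_singleton, ← Ideal.Quotient.eq_zero_iff_mem]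
  exact hunit.mul_right_eq_zero.mp (hscaled i)

theorem card_mul_le_of_forall_linForm_pow_dvd {S : Finset (ℙ K (Fin 2 → K))} {m p : ℕ}
    {G : MvPolynomial (Fin 2) K} (hG : G.IsHomogeneous p) (hG0 : G ≠ 0)
    (hdvd : ∀ v ∈ S, linForm v ^ m ∣ G) : S.card * m ≤ p := by
  have hprod_dvd : ∏ v ∈ S, linForm v ^ m ∣ G :=
    Finset.prod_dvd_of_isRelPrime (fun v _ w _ hvw => (isRelPrime_linForm hvw).pow) hdvd
  have hprod_hom : (∏ v ∈ S, linForm v ^ m).IsHomogeneous (S.card * m) := by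
    simpa using IsHomogeneous.prod S _ _ fun v _ => (isHomogeneous_linForm v).pow m
  calc S.card * m = (∏ v ∈ S, linForm v ^ m).totalDegree :=
        (hprod_hom.totalDegree (ne_zero_of_dvd_ne_zero hG0 hprod_dvd)).symm
    _ ≤ G.totalDegree := totalDegree_le_of_dvd_of_isDomain hprod_dvd hG0
    _ ≤ p := hG.totalDegree_le

theorem exists_isHomogeneous_forall_linForm_pow_dvd {S : Finset (ℙ K (Fin 2 → K))} {m p : ℕ}
    (h : S.card * m ≤ p) :
    ∃ G : MvPolynomial (Fin 2) K, G ≠ 0 ∧ G.IsHomogeneous p ∧ ∀ v ∈ S, linForm v ^ m ∣ G := by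
  refine ⟨(∏ v ∈ S, linForm v ^ m) * X 0 ^ (p - S.card * m), ?_, ?_, fun v hv => ?_⟩
  · exact mul_ne_zero (Finset.prod_ne_zero_iff.mpr fun v _ => pow_ne_zero m (linForm_ne_zero v))
      (pow_ne_zero _ (X_ne_zero 0))
  · have hhom := (IsHomogeneous.prod S _ _ fun v _ => (isHomogeneous_linForm v).pow m).mul
      (isHomogeneous_X_pow (R := K) (0 : Fin 2) (p - S.card * m))
    simpa [h] using hhom
  · exact (Finset.dvd_prod_of_mem _ hv).mul_right _

end LinForm

section Restriction

variable {R σ τ : Type*} [CommSemiring R]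

/-- The restriction `F(x, c)` of a polynomial in two groups of variables to a constant value `c`
of the second group. -/
def restrictRight (c : τ → R) : MvPolynomial (σ ⊕ τ) R →ₐ[R] MvPolynomial σ R :=
  aeval (Sum.elim X (C ∘ c))

/-- The restriction `F(c, y)` of a polynomial in two groups of variables to a constant value `c`
of the first group. -/
def restrictLeft (c : σ → R) : MvPolynomial (σ ⊕ τ) R →ₐ[R] MvPolynomial τ R :=
  aeval (Sum.elim (C ∘ c) X)

theorem restrictRight_rename_inl (c : τ → R) (G : MvPolynomial σ R) :
    restrictRight c (rename Sum.inl G) = G := by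
  rw [restrictRight, aeval_rename, Sum.elim_comp_inl, aeval_X_left_apply]

theorem restrictRight_rename_inr (c : τ → R) (H : MvPolynomial τ R) :
    restrictRight c (rename Sum.inr H) = (C (eval c H) : MvPolynomial σ R) := by
  rw [restrictRight, aeval_rename, Sum.elim_comp_inr]
  exact aeval_algebraMap_apply (MvPolynomial σ R) c H

theorem eval_restrictRight (u : σ → R) (c : τ → R) (F : MvPolynomial (σ ⊕ τ) R) :
    eval u (restrictRight c F) = eval (Sum.elim u c) F :=
  (aeval_sumElim F c u).symm

theorem eval_restrictLeft (c : σ → R) (u : τ → R) (F : MvPolynomial (σ ⊕ τ) R) :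
    eval u (restrictLeft c F) = eval (Sum.elim c u) F := by
  have hcomp : (aeval u).comp (restrictLeft c) = aeval (R := R) (Sum.elim c u) := by
    ext (i | i) <;> simp [restrictLeft]
  exact DFunLike.congr_fun hcomp F

end Restriction

theorem IsBiForm.isHomogeneous_restrictRight {F : R4} {p q : ℕ} (hF : IsBiForm F p q)
    (c : Fin 2 → ℂ) : (restrictRight c F).IsHomogeneous p := by
  refine isWeightedHomogeneous_aeval (AddMonoidHom.fst ℕ ℕ) ?_ hF
  rintro (i | i)
  · exact isHomogeneous_X ℂ i
  · exact isHomogeneous_C (Fin 2) (c i)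

theorem IsBiForm.isHomogeneous_restrictLeft {F : R4} {p q : ℕ} (hF : IsBiForm F p q)
    (c : Fin 2 → ℂ) : (restrictLeft c F).IsHomogeneous q := by
  refine isWeightedHomogeneous_aeval (AddMonoidHom.snd ℕ ℕ) ?_ hF
  rintro (i | i)
  · exact isHomogeneous_C (Fin 2) (c i)
  · exact isHomogeneous_X ℂ i

theorem IsBiForm.rename_mul_rename {G H : MvPolynomial (Fin 2) ℂ} {p q : ℕ}
    (hG : G.IsHomogeneous p) (hH : H.IsHomogeneous q) :
    IsBiForm (rename Sum.inl G * rename Sum.inr H) p q := by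
  have hGx : IsWeightedHomogeneous biWeight (rename Sum.inl G) (p, 0) := by
    rw [rename_eq_aeval]
    exact isWeightedHomogeneous_aeval (AddMonoidHom.inl ℕ ℕ)
      (fun i => isWeightedHomogeneous_X ℂ biWeight (Sum.inl i)) hG
  have hHy : IsWeightedHomogeneous biWeight (rename Sum.inr H) (0, q) := by
    rw [rename_eq_aeval]
    exact isWeightedHomogeneous_aeval (AddMonoidHom.inr ℕ ℕ)
      (fun i => isWeightedHomogeneous_X ℂ biWeight (Sum.inr i)) hH
  simpa [IsBiForm] using hGx.mul hHy

theorem pointIdeal_eq_span_rename (v h : ProjLine) :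
    pointIdeal (v, h) =
      Ideal.span {rename Sum.inl (linForm v), rename Sum.inr (linForm h)} := by
  simp [pointIdeal, linForm]

theorem linForm_pow_dvd_restrictRight_rep {v h : ProjLine} {m : ℕ} {F : R4}
    (hF : F ∈ pointIdeal (v, h) ^ m) : linForm v ^ m ∣ restrictRight h.rep F := by
  have hmap : (pointIdeal (v, h)).map (restrictRight h.rep) ≤ Ideal.span {linForm v} := by
    rw [pointIdeal_eq_span_rename, Ideal.map_span, Set.image_pair, restrictRight_rename_inl,
      restrictRight_rename_inr, eval_rep_linForm_self, map_zero, Set.pair_comm,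
      Ideal.span_insert_zero]
  rw [← Ideal.mem_span_singleton, ← Ideal.span_singleton_pow]
  refine Ideal.pow_right_mono hmap m ?_
  rw [← Ideal.map_pow]
  exact Ideal.mem_map_of_mem _ hF

theorem mem_symbPow_product_iff {ZV ZH : Finset ProjLine} {m : ℕ} {F : R4} :
    F ∈ symbPow (ZV ×ˢ ZH) m ↔ ∀ v ∈ ZV, ∀ h ∈ ZH, F ∈ pointIdeal (v, h) ^ m := by
  simp only [symbPow, Ideal.mem_iInf, Prod.forall, Finset.mem_product]
  tauto

theorem eq_zero_of_mem_symbPow_product {ZV ZH : Finset ProjLine} {m p q : ℕ} {F : R4}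
    (hF : F ∈ symbPow (ZV ×ˢ ZH) m) (hbi : IsBiForm F p q) (hp : p < ZV.card * m)
    (hq : q < ZH.card) : F = 0 := by
  rw [mem_symbPow_product_iff] at hF
  have hright : ∀ h ∈ ZH, restrictRight h.rep F = 0 := by
    intro h hh
    by_contra h0
    exact hp.not_ge <| card_mul_le_of_forall_linForm_pow_dvd
      (hbi.isHomogeneous_restrictRight h.rep) h0 fun v hv =>
        linForm_pow_dvd_restrictRight_rep (hF v hv h hh)
  have hleft (u : Fin 2 → ℂ) : restrictLeft u F = 0 := by
    by_contra h0
    have hdvd : ∀ h ∈ ZH, linForm h ^ 1 ∣ restrictLeft u F := by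
      intro h hh
      rw [pow_one]
      refine linForm_dvd_of_eval_rep_eq_zero (hbi.isHomogeneous_restrictLeft u) ?_
      rw [eval_restrictLeft, ← eval_restrictRight, hright h hh, map_zero]
    have hle := card_mul_le_of_forall_linForm_pow_dvd (hbi.isHomogeneous_restrictLeft u) h0 hdvd
    omega
  refine MvPolynomial.funext fun z => ?_
  rw [← Sum.elim_comp_inl_inr z, ← eval_restrictLeft, hleft, map_zero, map_zero]

theorem exists_isBiForm_mem_symbPow_product {ZV ZH : Finset ProjLine} {i j p q : ℕ}
    (hi : ZV.card * i ≤ p) (hj : ZH.card * j ≤ q) :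
    ∃ F ∈ symbPow (ZV ×ˢ ZH) (i + j), F ≠ 0 ∧ IsBiForm F p q := by
  obtain ⟨G, hG0, hG, hGdvd⟩ := exists_isHomogeneous_forall_linForm_pow_dvd hi
  obtain ⟨H, hH0, hH, hHdvd⟩ := exists_isHomogeneous_forall_linForm_pow_dvd hj
  refine ⟨rename Sum.inl G * rename Sum.inr H, ?_, ?_, .rename_mul_rename hG hH⟩
  · rw [mem_symbPow_product_iff]
    intro v hv h hh
    have hGmem : rename Sum.inl G ∈ pointIdeal (v, h) ^ i := by
      refine Ideal.mem_of_dvd _ (map_dvd (rename Sum.inl) (hGdvd v hv)) ?_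
      rw [map_pow, pointIdeal_eq_span_rename]
      exact Ideal.pow_mem_pow (Ideal.subset_span (.inl rfl)) i
    have hHmem : rename Sum.inr H ∈ pointIdeal (v, h) ^ j := by
      refine Ideal.mem_of_dvd _ (map_dvd (rename Sum.inr) (hHdvd h hh)) ?_
      rw [map_pow, pointIdeal_eq_span_rename]
      exact Ideal.pow_mem_pow (Ideal.subset_span (.inr rfl)) j
    rw [pow_add]
    exact Ideal.mul_mem_mul hGmem hHmem
  · exact mul_ne_zero
      ((map_ne_zero_iff _ (rename_injective _ Sum.inl_injective)).mpr hG0)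
      ((map_ne_zero_iff _ (rename_injective _ Sum.inr_injective)).mpr hH0)

theorem alphaStar_symbPow_product_le (ZV ZH : Finset ProjLine) (i j : ℕ) :
    alphaStar (symbPow (ZV ×ˢ ZH) (i + j)) ≤ max (ZV.card * i) (ZH.card * j) :=
  Nat.sInf_le (exists_isBiForm_mem_symbPow_product (le_max_left _ _) (le_max_right _ _))

theorem min_le_alphaStar_symbPow_product (ZV ZH : Finset ProjLine) (m : ℕ) :
    min (ZV.card * m) ZH.card ≤ alphaStar (symbPow (ZV ×ˢ ZH) m) := by
  have hne : {t : ℕ | ∃ F ∈ symbPow (ZV ×ˢ ZH) m, F ≠ 0 ∧ IsBiForm F t t}.Nonempty :=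
    ⟨ZV.card * m, exists_isBiForm_mem_symbPow_product (j := 0) le_rfl (by simp)⟩
  obtain ⟨F, hF, hF0, hbi⟩ := Nat.sInf_mem hne
  by_contra! hlt
  obtain ⟨hp, hq⟩ := lt_min_iff.mp hlt
  exact hF0 (eq_zero_of_mem_symbPow_product hF hbi hp hq)

theorem alphaStar_symbPow_product_of_mul_le {ZV ZH : Finset ProjLine} {m : ℕ}
    (h : ZV.card * m ≤ ZH.card) : alphaStar (symbPow (ZV ×ˢ ZH) m) = ZV.card * m := by
  refine le_antisymm ?_ ?_
  · simpa using alphaStar_symbPow_product_le ZV ZH m 0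
  · simpa [h] using min_le_alphaStar_symbPow_product ZV ZH m

theorem alphaStar_symbPow_product_succ {ZV ZH : Finset ProjLine} {m : ℕ}
    (h : ZV.card * m ≤ ZH.card) (h' : ZH.card ≤ ZV.card * (m + 1)) :
    alphaStar (symbPow (ZV ×ˢ ZH) (m + 1)) = ZH.card := by
  refine le_antisymm ?_ ?_
  · simpa [h] using alphaStar_symbPow_product_le ZV ZH m 1
  · simpa [h'] using min_le_alphaStar_symbPow_product ZV ZH (m + 1)

theorem alphaStar_top : alphaStar ⊤ = 0 :=
  Nat.sInf_eq_zero.mpr <| .inl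
    ⟨1, Submodule.mem_top, one_ne_zero, isWeightedHomogeneous_one ℂ biWeight⟩

theorem sum_Icc_jumpFun (Z : Finset (ProjLine × ProjLine)) (n : ℕ) :
    ∑ i ∈ Finset.Icc 1 n, jumpFun Z i = alphaStar (symbPow Z n) := by
  induction n with
  | zero => simp [symbPow, alphaStar_top]
  | succ n ih =>
    rw [Finset.sum_Icc_succ_top (by omega), ih, jumpFun, Nat.add_sub_cancel]
    ring

theorem jumpFun_product_of_mul_le {ZV ZH : Finset ProjLine} {j : ℕ} (hj : 1 ≤ j)
    (h : ZV.card * j ≤ ZH.card) : jumpFun (ZV ×ˢ ZH) j = ZV.card := by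
  have hpred : ZV.card * (j - 1) ≤ ZH.card :=
    (Nat.mul_le_mul_left _ (Nat.sub_le j 1)).trans h
  rw [jumpFun, alphaStar_symbPow_product_of_mul_le h, alphaStar_symbPow_product_of_mul_le hpred]
  push_cast [hj]
  ring

theorem alphaStar_symbPow_product_div_add_one {ZV ZH : Finset ProjLine} (hV : 0 < ZV.card) :
    alphaStar (symbPow (ZV ×ˢ ZH) (ZH.card / ZV.card + 1)) = ZH.card :=
  alphaStar_symbPow_product_succ (Nat.mul_div_le _ _) (Nat.lt_mul_div_succ _ hV).le

theorem jumpFun_product_div_add_one {ZV ZH : Finset ProjLine} (hV : 0 < ZV.card) :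
    jumpFun (ZV ×ˢ ZH) (ZH.card / ZV.card + 1) = (ZH.card % ZV.card : ℕ) := by
  rw [jumpFun, Nat.add_sub_cancel, alphaStar_symbPow_product_div_add_one hV,
    alphaStar_symbPow_product_of_mul_le (Nat.mul_div_le _ _), sub_eq_iff_eq_add]
  exact_mod_cast (Nat.mod_add_div _ _).symm

theorem isLeast_jumpFun_product_lt {ZV ZH : Finset ProjLine} (hV : 0 < ZV.card) :
    IsLeast {j : ℕ | 1 ≤ j ∧ jumpFun (ZV ×ˢ ZH) j < (ZV.card : ℤ)} (ZH.card / ZV.card + 1) := by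
  refine ⟨⟨Nat.le_add_left 1 _, ?_⟩, ?_⟩
  · rw [jumpFun_product_div_add_one hV]
    exact_mod_cast Nat.mod_lt _ hV
  · rintro j ⟨hj, hlt⟩
    by_contra! hjr
    have hle : ZV.card * j ≤ ZH.card := by
      rw [mul_comm]
      exact (Nat.le_div_iff_mul_le hV).mp (Nat.lt_succ_iff.mp hjr)
    exact hlt.ne (jumpFun_product_of_mul_le hj hle)

/-- A grid can be recovered from its jump function: for an `(a,b)`-grid `Z = Z_V × Z_H` in
`ℙ¹ × ℙ¹` with `1 ≤ a ≤ b`, one has `a = f(Z;1)`, the set `{j ≥ 1 : f(Z;j) < a}` is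
nonempty, and for `r = min{j ≥ 1 : f(Z;j) < a}` one has `b = ∑_{i=1}^r f(Z;i)`. -/
theorem grid_recovered_from_jumpFun (a b : ℕ) (ha : 1 ≤ a) (hab : a ≤ b)
    (ZV ZH : Finset ProjLine) (hV : ZV.card = a) (hH : ZH.card = b) :
    jumpFun (ZV ×ˢ ZH) 1 = (a : ℤ) ∧
    {j : ℕ | 1 ≤ j ∧ jumpFun (ZV ×ˢ ZH) j < (a : ℤ)}.Nonempty ∧
    (b : ℤ) =
      ∑ i ∈ Finset.Icc 1 (sInf {j : ℕ | 1 ≤ j ∧ jumpFun (ZV ×ˢ ZH) j < (a : ℤ)}),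
        jumpFun (ZV ×ˢ ZH) i := by
  subst hV hH
  have hleast := isLeast_jumpFun_product_lt (ZH := ZH) ha
  refine ⟨jumpFun_product_of_mul_le le_rfl (by simpa using hab), hleast.nonempty, ?_⟩
  rw [hleast.csInf_eq, sum_Icc_jumpFun, alphaStar_symbPow_product_div_add_one ha]
end
end
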